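/- arXiv:2107.08409 — 4 statements merged into one kernel-verified Lean document; each statement's English description precedes it below -/
import Mathlib

section
/- For any first-order language L, the relation 'is strictly more general than' on terms is well-founded: there is no infinite sequence of terms t₀, t₁, t₂, … in L.Term ℕ such that each t_{n+1} is strictly more general than t_n. Formally, the relation r s t := ((∃ θ : ℕ → L.Term ℕ, t = s.subst θ) ∧ ¬ (∃ ρ : ℕ → L.Term ℕ, s = t.subst ρ)) is a well-founded relation on L.Term ℕ. -/
namespace SMG
open FirstOrder FirstOrder.Language

/-- Number of function nodes. -/
def F {L : FirstOrder.Language} : L.Term ℕ → ℕ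
  | .var _ => 0
  | .func _ ts => 1 + ∑ i, F (ts i)

/-- Number of variable occurrences. -/
def V {L : FirstOrder.Language} : L.Term ℕ → ℕ
  | .var _ => 1
  | .func _ ts => ∑ i, V (ts i)

variable {L : FirstOrder.Language}

theorem F_le (s : L.Term ℕ) (θ : ℕ → L.Term ℕ) : F s ≤ F (s.subst θ) := by
  induction s with
  | var x => simp [F]
  | func f ts ih =>
    simp only [F, Term.subst]
    exact Nat.add_le_add_left (Finset.sum_le_sum fun i _ => ih i) 1

theorem F_eq (s : L.Term ℕ) (θ : ℕ → L.Term ℕ) (h : F s = F (s.subst θ)) :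
    ∀ x ∈ s.varFinset, ∃ y, θ x = .var y := by
  induction s with
  | var x =>
    intro z hz
    simp only [Term.varFinset, Finset.mem_singleton] at hz
    subst hz
    simp only [F, Term.subst] at h
    cases hθ : θ z with
    | var y => exact ⟨y, rfl⟩
    | func f ts => rw [hθ] at h; simp only [F] at h; omega
  | func f ts ih =>
    simp only [F, Term.subst] at h
    have h2 := (Finset.sum_eq_sum_iff_of_le (fun i _ => F_le (ts i) θ)).1 (Nat.add_left_cancel h)
    intro x hx
    simp only [Term.varFinset, Finset.mem_biUnion] at hx
    obtain ⟨i, hi, hx⟩ := hx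
    exact ih i (h2 i hi) x hx

theorem subst_congr (s : L.Term ℕ) (θ θ' : ℕ → L.Term ℕ)
    (h : ∀ x ∈ s.varFinset, θ x = θ' x) : s.subst θ = s.subst θ' := by
  induction s with
  | var x => exact h x (by simp)
  | func f ts ih =>
    simp only [Term.subst]
    congr 1
    funext i
    exact ih i fun x hx => h x (by
      simp only [Term.varFinset, Finset.mem_biUnion]; exact ⟨i, Finset.mem_univ _, hx⟩)

theorem subst_var (s : L.Term ℕ) : s.subst Term.var = s := by
  induction s with
  | var x => rfl
  | func f ts ih => simp only [Term.subst, ih]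

theorem subst_subst (s : L.Term ℕ) (θ ρ : ℕ → L.Term ℕ) :
    (s.subst θ).subst ρ = s.subst (fun x => (θ x).subst ρ) := by
  induction s with
  | var x => rfl
  | func f ts ih => simp only [Term.subst, ih]

theorem V_ren (s : L.Term ℕ) (g : ℕ → ℕ) : V (s.subst fun x => .var (g x)) = V s := by
  induction s with
  | var x => rfl
  | func f ts ih => simp only [Term.subst, V, ih]

theorem vars_ren (s : L.Term ℕ) (g : ℕ → ℕ) :
    (s.subst fun x => .var (g x)).varFinset = s.varFinset.image g := by
  induction s with
  | var x => simp [Term.subst]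
  | func f ts ih => simp only [Term.subst, Term.varFinset, ih, Finset.biUnion_image]

theorem card_le (s : L.Term ℕ) : s.varFinset.card ≤ V s := by
  induction s with
  | var x => simp [V]
  | func f ts ih =>
    simp only [Term.varFinset, V]
    exact Finset.card_biUnion_le.trans (Finset.sum_le_sum fun i _ => ih i)

end SMG

/-- The relation "is strictly more general than" on first-order terms is well-founded:
there is no infinite sequence of terms each strictly more general than the previous one. -/
theorem strictlyMoreGeneral_wellFounded (L : FirstOrder.Language) :
    WellFounded (fun s t : L.Term ℕ =>
      (∃ θ : ℕ → L.Term ℕ, t = s.subst θ) ∧ ¬ (∃ ρ : ℕ → L.Term ℕ, s = t.subst ρ)) := by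
  refine Subrelation.wf ?_ (InvImage.wf
    (fun t : L.Term ℕ => (SMG.F t, SMG.V t - t.varFinset.card))
    (WellFounded.prod_lex (wellFounded_lt (α := ℕ)) (wellFounded_lt (α := ℕ))))
  rintro s t ⟨⟨θ, rfl⟩, hn⟩
  simp only [InvImage, Prod.lex_def]
  rcases (SMG.F_le s θ).lt_or_eq with h | h
  · exact Or.inl h
  refine Or.inr ⟨h, ?_⟩
  have hv := SMG.F_eq s θ h
  choose! g hg using hv
  rw [SMG.subst_congr s θ (fun x => .var (g x)) hg] at hn ⊢
  rw [SMG.V_ren, SMG.vars_ren]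
  have h1 := SMG.card_le s
  have h2 : (s.varFinset.image g).card ≤ s.varFinset.card := Finset.card_image_le
  have h3 : (s.varFinset.image g).card ≠ s.varFinset.card := by
    intro he
    have hinj := Finset.card_image_iff.1 he
    apply hn
    refine ⟨fun y => .var (Function.invFunOn g s.varFinset y), ?_⟩
    rw [SMG.subst_subst]
    conv_lhs => rw [← SMG.subst_var s]
    apply SMG.subst_congr
    intro x hx
    simp only [FirstOrder.Language.Term.subst]
    rw [hinj.leftInvOn_invFunOn hx]
  omega
end

section
/- If ≻ is an irreflexive and transitive relation on ground terms L.Term Empty, then the closure ordering ≻_tc is an irreflexive and transitive relation on ground term closures (pairs (t, σ) with t : L.Term ℕ and σ : ℕ → L.Term Empty). -/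
namespace ClosureOrder

variable {L : FirstOrder.Language}

/-- `s` is an instance of `t`. -/
def IsInstance (s t : L.Term ℕ) : Prop :=
  ∃ θ : ℕ → L.Term ℕ, s = t.subst θ

/-- `s` is a proper instance of `t` (equivalently, `t` is strictly more general than `s`). -/
def ProperInstance (s t : L.Term ℕ) : Prop :=
  IsInstance s t ∧ ¬ IsInstance t s

/-- The closure ordering `≻_tc` on ground term closures induced by a relation `r` (`≻`)
on ground terms: `(s, σ) ≻_tc (t, ρ)` iff `s.subst σ ≻ t.subst ρ`, or
`s.subst σ = t.subst ρ` and `s` is a proper instance of `t`. -/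
def ClosGT (r : L.Term Empty → L.Term Empty → Prop)
    (c d : L.Term ℕ × (ℕ → L.Term Empty)) : Prop :=
  r (c.1.subst c.2) (d.1.subst d.2) ∨
    (c.1.subst c.2 = d.1.subst d.2 ∧ ProperInstance c.1 d.1)

theorem subst_subst_aux (t : L.Term ℕ) (θ η : ℕ → L.Term ℕ) :
    (t.subst θ).subst η = t.subst (fun i => (θ i).subst η) := by
  induction t with
  | var => rfl
  | func f ts ih => simp only [FirstOrder.Language.Term.subst, ih]

theorem IsInstance.trans' {s t u : L.Term ℕ} (h : IsInstance s t) (k : IsInstance t u) :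
    IsInstance s u := by
  obtain ⟨θ, rfl⟩ := h
  obtain ⟨η, rfl⟩ := k
  exact ⟨_, subst_subst_aux _ _ _⟩

/-- If `≻` is irreflexive and transitive on ground terms, then the closure ordering `≻_tc`
is irreflexive and transitive on ground term closures. -/
theorem closGT_irrefl_trans (r : L.Term Empty → L.Term Empty → Prop)
    (hirr : ∀ x, ¬ r x x) (htrans : ∀ {a b c}, r a b → r b c → r a c) :
    (∀ c : L.Term ℕ × (ℕ → L.Term Empty), ¬ ClosGT r c c) ∧
      (∀ c d e : L.Term ℕ × (ℕ → L.Term Empty),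
        ClosGT r c d → ClosGT r d e → ClosGT r c e) := by
  refine ⟨?_, ?_⟩
  · rintro c (h | ⟨-, h, h'⟩)
    · exact hirr _ h
    · exact h' h
  · rintro c d e (h | ⟨h, p, p'⟩) (k | ⟨k, q, q'⟩)
    · exact Or.inl (htrans h k)
    · exact Or.inl (k ▸ h)
    · exact Or.inl (h ▸ k)
    · exact Or.inr ⟨h.trans k, p.trans' q, fun w => q' (w.trans' p)⟩

end ClosureOrder
end

section
/- (Lemma 1, term part.) If ≻ is a well-founded and transitive relation on ground terms L.Term Empty, then the closure ordering ≻_tc is a well-founded relation on ground term closures (pairs (t, σ) with t : L.Term ℕ and σ : ℕ → L.Term Empty). -/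
namespace ClosureOrder

variable {L : FirstOrder.Language}

/-- number of function symbol occurrences -/
def fnCount : L.Term ℕ → ℕ
  | .var _ => 0
  | .func _ ts => 1 + ∑ i, fnCount (ts i)

/-- number of variable occurrences -/
def occ : L.Term ℕ → ℕ
  | .var _ => 1
  | .func _ ts => ∑ i, occ (ts i)

lemma fnCount_le (t : L.Term ℕ) (θ : ℕ → L.Term ℕ) : fnCount t ≤ fnCount (t.subst θ) := by
  induction t with
  | var x => simp [fnCount]
  | func f ts ih =>
    simp only [FirstOrder.Language.Term.subst, fnCount]
    have := Finset.sum_le_sum (fun i (_ : i ∈ Finset.univ) => ih i)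
    omega

lemma var_of_fnCount_eq (t : L.Term ℕ) (θ : ℕ → L.Term ℕ)
    (h : fnCount t = fnCount (t.subst θ)) :
    ∀ x ∈ t.varFinset, ∃ y, θ x = .var y := by
  induction t with
  | var x =>
    intro z hz
    simp only [FirstOrder.Language.Term.varFinset, Finset.mem_singleton] at hz
    subst hz
    simp only [FirstOrder.Language.Term.subst] at h
    cases hθ : θ z with
    | var y => exact ⟨y, rfl⟩
    | func f ts =>
      rw [hθ] at h
      simp only [fnCount] at h
      omega
  | func f ts ih =>
    intro x hx
    simp only [FirstOrder.Language.Term.varFinset, Finset.mem_biUnion, Finset.mem_univ,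
      true_and] at hx
    obtain ⟨i, hi⟩ := hx
    simp only [FirstOrder.Language.Term.subst, fnCount] at h
    have h2 := (Finset.sum_eq_sum_iff_of_le
      (fun i (_ : i ∈ Finset.univ) => fnCount_le (ts i) θ)).1 (by omega)
    exact ih i (h2 i (Finset.mem_univ _)) x hi

lemma subst_congr_vars (t : L.Term ℕ) (θ η : ℕ → L.Term ℕ)
    (h : ∀ x ∈ t.varFinset, θ x = η x) : t.subst θ = t.subst η := by
  induction t with
  | var x => exact h x (by simp)
  | func f ts ih =>
    simp only [FirstOrder.Language.Term.subst]
    congr 1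
    funext i
    refine ih i fun x hx => h x ?_
    simp only [FirstOrder.Language.Term.varFinset, Finset.mem_biUnion, Finset.mem_univ, true_and]
    exact ⟨i, hx⟩

lemma occ_rename (t : L.Term ℕ) (g : ℕ → ℕ) :
    occ (t.subst fun x => .var (g x)) = occ t := by
  induction t with
  | var x => simp [occ]
  | func f ts ih => simp [occ, ih]

lemma vars_rename (t : L.Term ℕ) (g : ℕ → ℕ) :
    (t.subst fun x => .var (g x)).varFinset = t.varFinset.image g := by
  induction t with
  | var x => simp
  | func f ts ih => simp [ih, Finset.biUnion_image]

lemma card_vars_le (t : L.Term ℕ) : t.varFinset.card ≤ occ t := by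
  induction t with
  | var x => simp [occ]
  | func f ts ih =>
    simp only [FirstOrder.Language.Term.varFinset, occ]
    exact Finset.card_biUnion_le.trans (Finset.sum_le_sum fun i _ => ih i)

lemma rename_back (t : L.Term ℕ) (g k : ℕ → ℕ) (h : ∀ x ∈ t.varFinset, k (g x) = x) :
    t = (t.subst fun x => .var (g x)).subst fun x => .var (k x) := by
  induction t with
  | var x => simpa using (h x (by simp)).symm
  | func f ts ih =>
    simp only [FirstOrder.Language.Term.subst]
    congr 1
    funext i
    refine ih i fun x hx => h x ?_
    simp only [FirstOrder.Language.Term.varFinset, Finset.mem_biUnion, Finset.mem_univ, true_and]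
    exact ⟨i, hx⟩

lemma properInstance_lex (s t : L.Term ℕ) (h : ProperInstance s t) :
    fnCount t < fnCount s ∨
      (fnCount t = fnCount s ∧ occ t - t.varFinset.card < occ s - s.varFinset.card) := by
  obtain ⟨⟨θ, rfl⟩, hn⟩ := h
  rcases (fnCount_le t θ).lt_or_eq with hlt | heq
  · exact Or.inl hlt
  refine Or.inr ⟨heq, ?_⟩
  have hv := var_of_fnCount_eq t θ heq
  have : ∃ g : ℕ → ℕ, ∀ x ∈ t.varFinset, θ x = .var (g x) := by
    choose! g hg using hv
    exact ⟨g, hg⟩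
  obtain ⟨g, hg⟩ := this
  rw [subst_congr_vars t θ (fun x => .var (g x)) hg] at hn ⊢
  have hc := card_vars_le (t.subst fun x => .var (g x))
  rw [occ_rename, vars_rename] at *
  have hle : (t.varFinset.image g).card ≤ t.varFinset.card := Finset.card_image_le
  have hne : (t.varFinset.image g).card ≠ t.varFinset.card := by
    intro he
    have hinj := Finset.card_image_iff.1 he
    exact hn ⟨_, rename_back t g (Function.invFunOn g t.varFinset)
      (fun x hx => hinj.leftInvOn_invFunOn hx)⟩
  have := card_vars_le t
  omega

/-- Lemma 1 (term part): if `≻` is a well-founded (i.e. its converse `≺` is a well-founded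
relation in the sense of Lean) and transitive relation on ground terms, then the closure
ordering `≻_tc` is a well-founded relation on ground term closures. -/
theorem closGT_wellFounded (r : L.Term Empty → L.Term Empty → Prop)
    (htrans : ∀ {a b c}, r a b → r b c → r a c)
    (hwf : WellFounded (Function.swap r)) :
    WellFounded (Function.swap (ClosGT r)) := by
  have w := (hwf.prod_lex ((wellFounded_lt (α := ℕ)).prod_lex (wellFounded_lt (α := ℕ))))
  refine Subrelation.wf ?_ (InvImage.wf (fun c : L.Term ℕ × (ℕ → L.Term Empty) =>
    (c.1.subst c.2, fnCount c.1, occ c.1 - c.1.varFinset.card)) w)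
  intro d c h
  simp only [InvImage, Prod.lex_def]
  rcases h with h | ⟨he, hp⟩
  · exact Or.inl h
  · exact Or.inr ⟨he.symm, properInstance_lex _ _ hp⟩

end ClosureOrder
end

section
/- (Non-totality of the closure ordering.) Let L be the first-order language with one binary function symbol f and two constant symbols a and b. Consider the two ground term closures c₁ = (f(x₀, b), σ₁) where σ₁ maps every variable to a, and c₂ = (f(a, x₀), σ₂) where σ₂ maps every variable to b. Then c₁ and c₂ represent the same ground term f(a, b), their term components are distinct, and for every irreflexive relation ≻ on ground terms, neither c₁ ≻_tc c₂ nor c₂ ≻_tc c₁ holds. -/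
namespace ClosureOrderEx

/-- Function symbols: a binary `f` and constants `a`, `b`. -/
inductive Fns : ℕ → Type
  | f : Fns 2
  | a : Fns 0
  | b : Fns 0

/-- The language with one binary function symbol `f` and two constants `a`, `b`. -/
def L : FirstOrder.Language :=
  ⟨Fns, fun _ => Empty⟩

open FirstOrder Language

/-- The ground term `a`. -/
def aG : L.Term Empty := Term.func Fns.a ![]

/-- The ground term `b`. -/
def bG : L.Term Empty := Term.func Fns.b ![]

/-- The ground term `f(a, b)`. -/
def fab : L.Term Empty := Term.func Fns.f ![aG, bG]

/-- `s` is an instance of `t`. -/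
def IsInstance (s t : L.Term ℕ) : Prop :=
  ∃ θ : ℕ → L.Term ℕ, s = t.subst θ

/-- `s` is a proper instance of `t`. -/
def ProperInstance (s t : L.Term ℕ) : Prop :=
  IsInstance s t ∧ ¬ IsInstance t s

/-- The closure ordering `≻_tc` on ground term closures induced by a relation `r` (`≻`)
on ground terms. -/
def ClosGT (r : L.Term Empty → L.Term Empty → Prop)
    (c d : L.Term ℕ × (ℕ → L.Term Empty)) : Prop :=
  r (c.1.subst c.2) (d.1.subst d.2) ∨
    (c.1.subst c.2 = d.1.subst d.2 ∧ ProperInstance c.1 d.1)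

/-- The closure `(f(x₀, b), σ₁)` where `σ₁` maps every variable to `a`. -/
def c₁ : L.Term ℕ × (ℕ → L.Term Empty) :=
  (Term.func Fns.f ![Term.var 0, bG.relabel Empty.elim], fun _ => aG)

/-- The closure `(f(a, x₀), σ₂)` where `σ₂` maps every variable to `b`. -/
def c₂ : L.Term ℕ × (ℕ → L.Term Empty) :=
  (Term.func Fns.f ![aG.relabel Empty.elim, Term.var 0], fun _ => bG)

theorem fg_inj {α : Type} {u v : Fin 2 → L.Term α}
    (h : (Term.func (L := L) Fns.f u) = Term.func (L := L) Fns.f v) (i : Fin 2) : u i = v i := by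
  injection h with _ _ h
  exact congrFun h i

theorem subst_c₁ : c₁.1.subst c₁.2 = fab := by
  refine congrArg (Term.func (L := L) Fns.f) (funext fun i => ?_)
  fin_cases i
  · rfl
  · exact congrArg (Term.func (L := L) Fns.b) (funext fun i => i.elim0)

theorem subst_c₂ : c₂.1.subst c₂.2 = fab := by
  refine congrArg (Term.func (L := L) Fns.f) (funext fun i => ?_)
  fin_cases i
  · exact congrArg (Term.func (L := L) Fns.a) (funext fun i => i.elim0)
  · rfl

theorem not_inst₁ : ¬ IsInstance c₁.1 c₂.1 := by
  rintro ⟨θ, h⟩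
  have h0 := fg_inj h 0
  exact Term.noConfusion rfl rfl (heq_of_eq h0)

theorem not_inst₂ : ¬ IsInstance c₂.1 c₁.1 := by
  rintro ⟨θ, h⟩
  have h0 := fg_inj h 1
  exact Term.noConfusion rfl rfl (heq_of_eq h0.symm)

/-- Non-totality of the closure ordering: `c₁` and `c₂` represent the same ground term
`f(a, b)`, have distinct term components, and are incomparable in `≻_tc` for every
irreflexive relation `≻` on ground terms. -/
theorem closGT_not_total :
    c₁.1.subst c₁.2 = fab ∧ c₂.1.subst c₂.2 = fab ∧ c₁.1 ≠ c₂.1 ∧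
      ∀ r : L.Term Empty → L.Term Empty → Prop, (∀ x, ¬ r x x) →
        ¬ ClosGT r c₁ c₂ ∧ ¬ ClosGT r c₂ c₁ := by
  refine ⟨subst_c₁, subst_c₂, ?_, ?_⟩
  · intro h
    have h0 := fg_inj h 0
    exact Term.noConfusion rfl rfl (heq_of_eq h0)
  · intro r hr
    constructor
    · rintro (h | h)
      · rw [subst_c₁, subst_c₂] at h
        exact hr _ h
      · exact not_inst₁ h.2.1
    · rintro (h | h)
      · rw [subst_c₁, subst_c₂] at h
        exact hr _ h
      · exact not_inst₂ h.2.1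

end ClosureOrderEx
end
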